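/- Let n be an even positive integer and let S_int = {[a, a + n/2] : a = 1, ..., n/2} be the family of all intervals of n/2 + 1 consecutive integers in [n] starting at a ∈ {1,...,n/2}. Then HHdim(S_int) ≤ 3. -/

import Mathlib

/-- The support of a vector `v`: the set of its non-zero coordinates. -/
def vecSupp {α : Type*} (v : α → ℝ) : Set α := {i | v i ≠ 0}

/-- The set of heavy hitters of `v` induced by the set system `S`:
indices `i` such that some member `s ∈ S` satisfies `supp(v) ∩ s = {i}`. -/
def HHset {α : Type*} (S : Set (Set α)) (v : α → ℝ) : Set α :=
  {i | ∃ s ∈ S, vecSupp v ∩ s = {i}}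

/-- The heavy-hitter dimension of a set system: the supremum over vectors `v`
of the number of heavy hitters induced by `S`. -/
noncomputable def HHdim {α : Type*} (S : Set (Set α)) : ℕ :=
  sSup {k | ∃ v : α → ℝ, (HHset S v).ncard = k}

/-!
Let `x < y < z` be heavy hitters for an intersecting family of order-convex sets, with `x` isolated
by `s` and `z` by `u`. A common point `p` of `s` and `u` lies on one side of `y`: if `y ≤ p`,
convexity puts `y` into `s`, which isolates `x`; if `p ≤ y`, it puts `y` into `u`, which isolates
`z`. So a vector never has more than two heavy hitters. The intervals `[a, a + m]` with `a ≤ m` all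
contain `m`.
-/

lemma HHset_subset_vecSupp {α : Type*} (S : Set (Set α)) (v : α → ℝ) : HHset S v ⊆ vecSupp v := by
  rintro i ⟨s, -, hi⟩
  exact (hi.ge rfl).1

lemma exists_isolating_of_mem_HHset {α : Type*} {S : Set (Set α)} {v : α → ℝ} {i : α}
    (hi : i ∈ HHset S v) : ∃ s ∈ S, i ∈ s ∧ ∀ j ∈ vecSupp v, j ∈ s → j = i := by
  obtain ⟨s, hs, hi⟩ := hi
  exact ⟨s, hs, (hi.ge rfl).2, fun j hjv hjs ↦ hi.le ⟨hjv, hjs⟩⟩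

lemma HHdim_le_of_forall_encard_le {α : Type*} {S : Set (Set α)} {k : ℕ}
    (h : ∀ v : α → ℝ, (HHset S v).encard ≤ k) : HHdim S ≤ k := by
  refine csSup_le' ?_
  rintro _ ⟨v, rfl⟩
  exact_mod_cast (HHset S v).ncard_le_encard.trans (h v)

lemma intersecting_of_forall_mem {α : Type*} {S : Set (Set α)} {p : α} (hp : ∀ s ∈ S, p ∈ s) :
    S.Intersecting :=
  fun s hs t ht ↦ Set.not_disjoint_iff.2 ⟨p, hp s hs, hp t ht⟩

section LinearOrder

variable {α : Type*} [LinearOrder α]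

lemma encard_le_two_of_forall_not_lt_lt {s : Set α}
    (h : ∀ x ∈ s, ∀ y ∈ s, ∀ z ∈ s, x < y → y < z → False) : s.encard ≤ 2 := by
  have hfin : s.Finite := Set.finite_of_forall_not_lt_lt h
  rw [← hfin.cast_ncard_eq]
  by_contra! hcard
  obtain ⟨x, y, z, hx, hy, hz, hxy, hxz, hyz⟩ := (Set.two_lt_ncard_iff hfin).1 (mod_cast hcard)
  rcases eq_or_eq_or_eq_of_forall_not_lt_lt (fun a b c : s ↦ h a a.2 b b.2 c c.2)
      ⟨x, hx⟩ ⟨y, hy⟩ ⟨z, hz⟩ with heq | heq | heq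
  · exact hxy (congrArg Subtype.val heq)
  · exact hyz (congrArg Subtype.val heq)
  · exact hxz (congrArg Subtype.val heq)

lemma HHset_encard_le_two {S : Set (Set α)} (hconv : ∀ s ∈ S, s.OrdConnected)
    (hS : S.Intersecting) (v : α → ℝ) : (HHset S v).encard ≤ 2 := by
  refine encard_le_two_of_forall_not_lt_lt fun x hx y hy z hz hxy hyz ↦ ?_
  have hyv : y ∈ vecSupp v := HHset_subset_vecSupp S v hy
  obtain ⟨s, hs, hxs, hsx⟩ := exists_isolating_of_mem_HHset hx
  obtain ⟨u, hu, hzu, huz⟩ := exists_isolating_of_mem_HHset hz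
  obtain ⟨p, hps, hpu⟩ := Set.not_disjoint_iff.1 (hS hs hu)
  rcases le_total y p with hyp | hpy
  · exact hxy.ne' (hsx y hyv ((hconv s hs).out hxs hps ⟨hxy.le, hyp⟩))
  · exact hyz.ne (huz y hyv ((hconv u hu).out hpu hzu ⟨hpy, hyz.le⟩))

theorem HHdim_half_intervals_le_three_general {S : Set (Set α)} (hconv : ∀ s ∈ S, s.OrdConnected)
    (hS : S.Intersecting) : HHdim S ≤ 2 :=
  HHdim_le_of_forall_encard_le (HHset_encard_le_two hconv hS)

end LinearOrder

/-- The family `S_int` of the intervals of `m + 1` consecutive integers in `[2m]`, with `m = n / 2`,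
encoded as subsets of `ℕ`. -/
def halfIntervals (m : ℕ) : Set (Set ℕ) :=
  {s | ∃ a : ℕ, 1 ≤ a ∧ a ≤ m ∧ s = Set.Icc a (a + m)}

lemma ordConnected_of_mem_halfIntervals {m : ℕ} : ∀ s ∈ halfIntervals m, s.OrdConnected := by
  rintro _ ⟨a, -, -, rfl⟩
  exact Set.ordConnected_Icc

lemma intersecting_halfIntervals (m : ℕ) : (halfIntervals m).Intersecting := by
  refine intersecting_of_forall_mem (p := m) ?_
  rintro _ ⟨a, -, ham, rfl⟩
  exact ⟨ham, Nat.le_add_left m a⟩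

/-- For even `n > 0`, the family of intervals
`[a, a + n/2]` for `a = 1, …, n/2` (intervals of `n/2 + 1` consecutive
integers in `[n]`) has heavy-hitter dimension at most `3`. -/
theorem HHdim_half_intervals_le_three (n : ℕ) (hn : 0 < n) (he : Even n) :
    HHdim {s : Set ℕ | ∃ a : ℕ, 1 ≤ a ∧ a ≤ n / 2 ∧ s = Set.Icc a (a + n / 2)} ≤ 3 := by
  exact (HHdim_half_intervals_le_three_general ordConnected_of_mem_halfIntervals
    (intersecting_halfIntervals (n / 2))).trans (Nat.le_succ 2)
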